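/- arXiv:1710.01936 — 2 statements merged into one kernel-verified Lean document; each statement's English description precedes it below -/
import Mathlib

section
/- Pollard's theorem for k-fold sumsets: for prime p, subsets A_1,...,A_k of Z_p of sizes a_1,...,a_k, and every integer r ≥ 1, Σ_{i=1}^r n_i(A_1,...,A_k) ≥ Σ_{i=1}^r n_i([a_1],...,[a_k]), where [a] := {0,1,...,a-1} ⊆ Z_p and n_i(A_1,...,A_k) := |{x ∈ Z_p : x has at least i representations as x_1+...+x_k with x_j ∈ A_j}|. -/
/-- Number of representations of `x` as `x 1 + ... + x k` with `x j ∈ A j`. -/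
def sigmaCount {p : ℕ} {k : ℕ} (x : ZMod p) (A : Fin k → Finset (ZMod p)) : ℕ :=
  ((Fintype.piFinset A).filter (fun y => x = ∑ j : Fin k, y j)).card

/-- `ncount i A` is the number of `x ∈ ZMod p` with at least `i` representations. -/
def ncount {p : ℕ} [NeZero p] {k : ℕ} (i : ℕ) (A : Fin k → Finset (ZMod p)) : ℕ :=
  (Finset.univ.filter (fun x : ZMod p => i ≤ sigmaCount x A)).card

/-- The interval `[a] = {0, 1, ..., a-1}` in `ZMod p`. -/
def initInterval (p a : ℕ) : Finset (ZMod p) :=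
  (Finset.range a).image (fun j : ℕ => (j : ZMod p))

namespace Pollard

open Finset

variable {p : ℕ}

/-- The `ℕ`-valued indicator function of a finite subset of `ZMod p`. -/
def ind (A : Finset (ZMod p)) (x : ZMod p) : ℕ := if x ∈ A then 1 else 0

lemma ind_le_one (A : Finset (ZMod p)) (x : ZMod p) : ind A x ≤ 1 := by
  unfold ind; split_ifs <;> simp

lemma natCast_injOn_range {b : ℕ} (hb : b ≤ p) :
    Set.InjOn (fun j : ℕ => (j : ZMod p)) (range b) := by
  intro i hi j hj h
  simp only [coe_range, Set.mem_Iio] at hi hj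
  have := (ZMod.natCast_eq_natCast_iff' i j p).mp h
  rwa [Nat.mod_eq_of_lt (by omega), Nat.mod_eq_of_lt (by omega)] at this

lemma natCast_mem_initInterval {i a : ℕ} (h : i < a) : (i : ZMod p) ∈ initInterval p a :=
  mem_image_of_mem _ (mem_range.mpr h)

lemma card_initInterval {b : ℕ} (hb : b ≤ p) : (initInterval p b).card = b := by
  rw [initInterval, card_image_of_injOn (natCast_injOn_range hb), card_range]

lemma ind_initInterval_reflect (b : ℕ) (z : ZMod p) :
    ind (initInterval p b) ((b : ZMod p) - 1 - z) = ind (initInterval p b) z := by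
  have h : ∀ z, z ∈ initInterval p b → (b : ZMod p) - 1 - z ∈ initInterval p b := by
    intro z hz
    obtain ⟨i, hi, rfl⟩ := mem_image.mp hz
    rw [mem_range] at hi
    have : (b : ZMod p) - 1 - i = ((b - 1 - i : ℕ) : ZMod p) := by
      rw [Nat.cast_sub (by omega), Nat.cast_sub (by omega)]; simp
    rw [this]
    exact natCast_mem_initInterval (by omega)
  unfold ind
  congr 1
  refine propext ⟨fun hz => ?_, h z⟩
  simpa using h _ hz

/-- `g` is symmetric about `c / 2` and decreases away from it. -/
def SymmDecr (c : ℤ) (g : ZMod p → ℕ) : Prop :=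
  ∀ x y : ℤ, |2 * x - c| ≤ |2 * y - c| → |2 * y - c| ≤ p → g (y : ZMod p) ≤ g (x : ZMod p)

lemma SymmDecr.translate {c : ℤ} {g : ZMod p → ℕ} (h : SymmDecr c g) (d : ℤ) :
    SymmDecr (c - 2 * d) fun x : ZMod p => g (x + (d : ZMod p)) := by
  intro x y hxy hy
  have e : ∀ z : ℤ, 2 * z - (c - 2 * d) = 2 * (z + d) - c := fun z => by ring
  rw [e, e] at hxy
  rw [e] at hy
  simpa using h _ _ hxy hy

lemma sigmaCount_zero (A : Fin 0 → Finset (ZMod p)) :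
    (fun x => sigmaCount x A) = ind ({0} : Finset (ZMod p)) := by
  funext x
  by_cases h : x = 0 <;> simp [sigmaCount, ind, h]

variable [NeZero p]

/-- Convolution on `ZMod p`. -/
def conv (f g : ZMod p → ℕ) (x : ZMod p) : ℕ := ∑ y, f (x - y) * g y

/-- `f` is majorized by `g`: both have the same mass and `f` is at least as spread out. -/
def Maj (f g : ZMod p → ℕ) : Prop :=
  ∑ x, f x = ∑ x, g x ∧ ∀ r, ∑ x, min r (g x) ≤ ∑ x, min r (f x)

lemma sum_ind (A : Finset (ZMod p)) : ∑ x, ind A x = A.card := by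
  simp [ind]

lemma conv_comm (f g : ZMod p → ℕ) : conv f g = conv g f := by
  funext x
  unfold conv
  rw [← Equiv.sum_comp (Equiv.subLeft x)]
  simp [mul_comm]

lemma add_conv (f₁ f₂ g : ZMod p → ℕ) : conv (f₁ + f₂) g = conv f₁ g + conv f₂ g := by
  funext x
  simp [conv, add_mul, sum_add_distrib]

lemma conv_add (f g₁ g₂ : ZMod p → ℕ) : conv f (g₁ + g₂) = conv f g₁ + conv f g₂ := by
  funext x
  simp [conv, mul_add, sum_add_distrib]

lemma sum_conv (f g : ZMod p → ℕ) : ∑ x, conv f g x = (∑ x, f x) * ∑ x, g x := by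
  unfold conv
  rw [sum_comm, mul_sum]
  refine sum_congr rfl fun y _ => ?_
  rw [← sum_mul, ← Equiv.sum_comp (Equiv.subRight y) f]
  simp

lemma conv_mono {f₁ f₂ g₁ g₂ : ZMod p → ℕ} (hf : ∀ x, f₁ x ≤ f₂ x) (hg : ∀ x, g₁ x ≤ g₂ x)
    (x : ZMod p) : conv f₁ g₁ x ≤ conv f₂ g₂ x :=
  sum_le_sum fun _ _ => Nat.mul_le_mul (hf _) (hg _)

lemma conv_ind (f : ZMod p → ℕ) (B : Finset (ZMod p)) (x : ZMod p) :
    conv f (ind B) x = ∑ y ∈ B, f (x - y) := by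
  simp [conv, ind]

lemma conv_ind_le_card_right (A B : Finset (ZMod p)) (x : ZMod p) :
    conv (ind A) (ind B) x ≤ B.card := by
  rw [conv_ind]
  calc _ ≤ ∑ _y ∈ B, 1 := sum_le_sum fun _ _ => ind_le_one _ _
    _ = _ := by simp

lemma conv_ind_le_card_left (A B : Finset (ZMod p)) (x : ZMod p) :
    conv (ind A) (ind B) x ≤ A.card := by
  rw [conv_comm]; exact conv_ind_le_card_right B A x

lemma conv_translate (f g : ZMod p → ℕ) (d x : ZMod p) :
    conv (fun y => f (y + d)) g x = conv f g (x + d) := by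
  unfold conv
  refine sum_congr rfl fun y _ => ?_
  simp only [sub_add_eq_add_sub]

lemma sum_min_conv_translate (f g : ZMod p → ℕ) (d : ZMod p) (r : ℕ) :
    ∑ x, min r (conv (fun y => f (y + d)) g x) = ∑ x, min r (conv f g x) := by
  simp_rw [conv_translate]
  exact Equiv.sum_comp (Equiv.addRight d) fun x => min r (conv f g x)

/-- The identity behind the Dyson transform `(A, B) ↦ (A ∪ B, A ∩ B)`. -/
lemma conv_ind_eq_union_inter (A B : Finset (ZMod p)) :
    conv (ind A) (ind B) =
      conv (ind (A ∪ B)) (ind (A ∩ B)) + conv (ind (A \ B)) (ind (B \ A)) := by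
  have hA : ind A = ind (A \ B) + ind (A ∩ B) := by
    funext x; by_cases h1 : x ∈ A <;> by_cases h2 : x ∈ B <;> simp [ind, h1, h2]
  have hB : ind B = ind (B \ A) + ind (A ∩ B) := by
    funext x; by_cases h1 : x ∈ A <;> by_cases h2 : x ∈ B <;> simp [ind, h1, h2]
  have hU : ind (A ∪ B) = ind (A \ B) + ind (B \ A) + ind (A ∩ B) := by
    funext x; by_cases h1 : x ∈ A <;> by_cases h2 : x ∈ B <;> simp [ind, h1, h2]
  rw [hU, hA, hB]
  simp only [add_conv, conv_add]
  rw [conv_comm (ind (A ∩ B)) (ind (B \ A))]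
  abel

/-- Some translate of `A` meets `B` without containing it. -/
lemma exists_translate (hp : p.Prime) {A B : Finset (ZMod p)} (hA : A.Nonempty)
    (hAp : A.card < p) (hB : 2 ≤ B.card) :
    ∃ d : ZMod p, (∃ b ∈ B, b + d ∈ A) ∧ ∃ b ∈ B, b + d ∉ A := by
  have : Fact p.Prime := ⟨hp⟩
  by_contra! H
  obtain ⟨b₀, hb₀, b₁, hb₁, hne⟩ := one_lt_card.mp hB
  obtain ⟨a₀, ha₀⟩ := hA
  have hstep : ∀ a ∈ A, a + (b₁ - b₀) ∈ A := by
    intro a ha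
    have := H (a - b₀) ⟨b₀, hb₀, by simpa using ha⟩ b₁ hb₁
    rwa [show a + (b₁ - b₀) = b₁ + (a - b₀) by ring]
  have hall : ∀ n : ℕ, a₀ + n * (b₁ - b₀) ∈ A := by
    intro n
    induction n with
    | zero => simpa using ha₀
    | succ n ih =>
      have h := hstep _ ih
      rwa [show a₀ + n * (b₁ - b₀) + (b₁ - b₀) = a₀ + ((n + 1 : ℕ) : ZMod p) * (b₁ - b₀) by
        push_cast; ring] at h
  have huniv : A = univ := by
    refine eq_univ_of_forall fun x => ?_
    have h := hall ((x - a₀) / (b₁ - b₀)).val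
    have hsub : b₁ - b₀ ≠ 0 := sub_ne_zero.mpr hne.symm
    rw [ZMod.natCast_val, ZMod.cast_id, div_mul_cancel₀ _ hsub] at h
    simpa using h
  rw [huniv, card_univ, ZMod.card] at hAp
  exact lt_irrefl _ hAp

lemma min_add_le_min_add {s t u v : ℕ} (hst : s ≤ t) :
    min s u + min (t - s) v ≤ min t (u + v) := by omega

/-- Pollard's theorem for two sets, in the range without overflow. -/
lemma two_fold_of_card_add_le (hp : p.Prime) (n : ℕ) :
    ∀ (A B : Finset (ZMod p)) (t : ℕ), B.card = n → t ≤ A.card → t ≤ B.card →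
      A.card + B.card ≤ p + t →
      t * (A.card + B.card - t) ≤ ∑ x, min t (conv (ind A) (ind B) x) := by
  induction n using Nat.strong_induction_on with
  | _ n ih =>
    intro A B t hn htA htB hle
    rcases Nat.eq_zero_or_pos t with rfl | ht
    · simp
    rcases htB.eq_or_lt with rfl | htB
    · have : ∀ x, min B.card (conv (ind A) (ind B) x) = conv (ind A) (ind B) x := fun x =>
        min_eq_right (conv_ind_le_card_right A B x)
      simp only [this, sum_conv, sum_ind]
      rw [Nat.add_sub_cancel, mul_comm]
    obtain ⟨d, ⟨b, hb, hbA⟩, b', hb', hbA'⟩ :=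
      exists_translate hp (A := A) (B := B) (card_pos.mp (by omega)) (by omega) (by omega)
    set A' := univ.filter fun x => x + d ∈ A with hA'
    have hind : ind A' = fun x => ind A (x + d) := by funext x; simp [ind, hA']
    have hcard : A'.card = A.card := by
      rw [← sum_ind, ← sum_ind A, hind]
      exact Equiv.sum_comp (Equiv.addRight d) (ind A)
    have hsum : ∑ x, min t (conv (ind A) (ind B) x) = ∑ x, min t (conv (ind A') (ind B) x) := by
      rw [hind, sum_min_conv_translate]
    rw [hsum, ← hcard]
    rw [← hcard] at hle htA
    have hs0 : 0 < (A' ∩ B).card := card_pos.mpr ⟨b, by simp [hA', hb, hbA]⟩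
    have hsB : (A' ∩ B).card < B.card :=
      card_lt_card ⟨inter_subset_right, fun h =>
        hbA' (by simpa [hA'] using (mem_inter.mp (h hb')).1)⟩
    have hui := card_union_add_card_inter A' B
    have hdA := card_sdiff_add_card_inter A' B
    have hdB := card_sdiff_add_card_inter B A'
    rw [inter_comm] at hdB
    rw [conv_ind_eq_union_inter]
    simp only [Pi.add_apply]
    rcases le_or_gt t (A' ∩ B).card with hts | hts
    · have := ih _ (hn ▸ hsB) (A' ∪ B) (A' ∩ B) t rfl (by omega) hts (by omega)
      rw [hui] at this
      exact this.trans (sum_le_sum fun x _ => min_le_min_left _ (Nat.le_add_right _ _))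
    · set s := (A' ∩ B).card with hs
      have h1 : ∑ x, min s (conv (ind (A' ∪ B)) (ind (A' ∩ B)) x) = (A' ∪ B).card * s := by
        have : ∀ x, min s (conv (ind (A' ∪ B)) (ind (A' ∩ B)) x) =
            conv (ind (A' ∪ B)) (ind (A' ∩ B)) x := fun x =>
          min_eq_right (conv_ind_le_card_right _ _ x)
        simp only [this, sum_conv, sum_ind, ← hs]
      have h2 := ih (B \ A').card (by omega) (A' \ B) (B \ A') (t - s) rfl
        (by omega) (by omega) (by omega)
      have h3 : t * (A'.card + B.card - t) =
          (A' ∪ B).card * s + (t - s) * ((A' \ B).card + (B \ A').card - (t - s)) := by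
        have e1 : (A' ∪ B).card = (A' \ B).card + (B \ A').card + s := by omega
        obtain ⟨u, rfl⟩ := Nat.exists_eq_add_of_lt hts
        obtain ⟨v, hv⟩ : ∃ v, (B \ A').card = u + 1 + v := ⟨(B \ A').card - (u + 1), by omega⟩
        have e2 : A'.card + B.card - (s + u + 1) = (A' \ B).card + s + v := by omega
        have e3 : s + u + 1 - s = u + 1 := by omega
        have e4 : (A' \ B).card + (u + 1 + v) - (u + 1) = (A' \ B).card + v := by omega
        rw [e1, e2, e3, hv, e4]
        ring
      rw [h3, ← h1]
      refine (Nat.add_le_add_left h2 _).trans ?_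
      rw [← sum_add_distrib]
      exact sum_le_sum fun x _ => min_add_le_min_add hts.le

lemma two_fold_lower (hp : p.Prime) (A B : Finset (ZMod p)) (t : ℕ)
    (htA : t ≤ A.card) (htB : t ≤ B.card) :
    t * min p (A.card + B.card - t) ≤ ∑ x, min t (conv (ind A) (ind B) x) := by
  rcases le_total (A.card + B.card) (p + t) with h | h
  · exact (Nat.mul_le_mul_left _ (min_le_right _ _)).trans
      (two_fold_of_card_add_le hp _ A B t rfl htA htB h)
  · have hAp : A.card ≤ p := by simpa [ZMod.card] using card_le_univ A
    obtain ⟨B', hB', hc⟩ := exists_subset_card_eq (s := B) (n := p + t - A.card) (by omega)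
    have h1 := two_fold_of_card_add_le hp _ A B' t rfl htA (by omega) (by omega)
    have h2 : A.card + B'.card - t = p := by omega
    rw [h2] at h1
    refine (Nat.mul_le_mul_left _ (min_le_left _ _)).trans (h1.trans ?_)
    refine sum_le_sum fun x _ => min_le_min_left _ (conv_mono (fun _ => le_rfl) (fun y => ?_) x)
    unfold ind
    by_cases hy : y ∈ B'
    · simp [hy, hB' hy]
    · simp [hy]

lemma conv_initInterval (f : ZMod p → ℕ) {b : ℕ} (hb : b ≤ p) (x : ZMod p) :
    conv f (ind (initInterval p b)) x = ∑ j ∈ range b, f (x - j) := by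
  rw [conv_ind, initInterval, sum_image (natCast_injOn_range hb)]

lemma sum_min_interval_le {a t b : ℕ} (ha : a ≤ p) (hta : t ≤ a) (htb : t ≤ b) :
    ∑ x, min t (∑ j ∈ range b, ind (initInterval p a) (x - j)) ≤ t * (a + b - t) := by
  induction b, htb using Nat.le_induction with
  | base =>
    calc _ ≤ ∑ x, ∑ j ∈ range t, ind (initInterval p a) (x - j) :=
          sum_le_sum fun x _ => min_le_right _ _
      _ = ∑ j ∈ range t, ∑ x, ind (initInterval p a) (x - j) := sum_comm
      _ = ∑ j ∈ range t, a := by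
          refine sum_congr rfl fun j _ => ?_
          have := Equiv.sum_comp (Equiv.subRight (j : ZMod p)) (ind (initInterval p a))
          simp only [Equiv.subRight_apply] at this
          rw [this, sum_ind, card_initInterval ha]
      _ = _ := by simp
  | succ b htb ih =>
    set E := (Ico (a - t) a).image fun i : ℕ => ((b + i : ℕ) : ZMod p) with hE
    have hEc : E.card ≤ t := card_image_le.trans (by simp; omega)
    have key : ∀ x, min t (∑ j ∈ range (b + 1), ind (initInterval p a) (x - j)) ≤
        min t (∑ j ∈ range b, ind (initInterval p a) (x - j)) + ind E x := by
      intro x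
      rw [sum_range_succ]
      by_cases hx : x - b ∈ initInterval p a
      · obtain ⟨i, hi, hix⟩ := mem_image.mp hx
        rw [mem_range] at hi
        have hxi : x = ((b + i : ℕ) : ZMod p) := by
          push_cast; rw [hix]; ring
        by_cases hit : a - t ≤ i
        · have : x ∈ E := by
            rw [hE, hxi]; exact mem_image_of_mem _ (mem_Ico.mpr ⟨hit, hi⟩)
          have h1 : ind E x = 1 := by simp [ind, this]
          have h2 := ind_le_one (initInterval p a) (x - b)
          omega
        · have : t ≤ ∑ j ∈ range b, ind (initInterval p a) (x - j) := by
            calc t = ∑ j ∈ Ico (b - t) b, 1 := by simp; omega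
              _ ≤ ∑ j ∈ Ico (b - t) b, ind (initInterval p a) (x - j) := by
                refine sum_le_sum fun j hj => ?_
                rw [mem_Ico] at hj
                have : x - j = ((b + i - j : ℕ) : ZMod p) := by
                  rw [hxi, Nat.cast_sub (by omega)]
                rw [this, ind, if_pos (natCast_mem_initInterval (by omega))]
              _ ≤ _ := sum_le_sum_of_subset fun j hj => by
                rw [mem_Ico] at hj; exact mem_range.mpr hj.2
          omega
      · have : ind (initInterval p a) (x - b) = 0 := by simp [ind, hx]
        omega
    calc _ ≤ ∑ x, (min t (∑ j ∈ range b, ind (initInterval p a) (x - j)) + ind E x) :=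
          sum_le_sum fun x _ => key x
      _ ≤ t * (a + b - t) + t := by
          rw [sum_add_distrib, sum_ind]; exact Nat.add_le_add ih hEc
      _ = t * (a + (b + 1) - t) := by
          rw [← Nat.mul_succ]; congr 1; omega

lemma card_le_p (A : Finset (ZMod p)) : A.card ≤ p := by
  simpa [ZMod.card] using card_le_univ A

/-- Pollard's theorem for two sets. -/
lemma maj_two (hp : p.Prime) (A B : Finset (ZMod p)) :
    Maj (conv (ind A) (ind B))
      (conv (ind (initInterval p A.card)) (ind (initInterval p B.card))) := by
  have ha := card_le_p A
  have hb := card_le_p B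
  have htot : ∑ x, conv (ind A) (ind B) x =
      ∑ x, conv (ind (initInterval p A.card)) (ind (initInterval p B.card)) x := by
    simp only [sum_conv, sum_ind, card_initInterval ha, card_initInterval hb]
  refine ⟨htot, fun r => ?_⟩
  by_cases hr : r ≤ A.card ∧ r ≤ B.card
  · refine le_trans ?_ (two_fold_lower hp A B r hr.1 hr.2)
    rw [← Nat.mul_min_mul_left]
    refine le_min ?_ ?_
    · calc _ ≤ ∑ _x : ZMod p, r := sum_le_sum fun x _ => min_le_left _ _
        _ = r * p := by simp [ZMod.card, mul_comm]
    · simp only [conv_initInterval _ hb]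
      exact sum_min_interval_le ha hr.1 hr.2
  · have : ∀ x, min r (conv (ind A) (ind B) x) = conv (ind A) (ind B) x := fun x => by
      have h1 := conv_ind_le_card_left A B x
      have h2 := conv_ind_le_card_right A B x
      omega
    simp only [this]
    rw [htot]
    exact sum_le_sum fun x _ => min_le_right _ _

/-- The number of points where `f` exceeds `s`. -/
def level (f : ZMod p → ℕ) (s : ℕ) : ℕ := (univ.filter fun x => s < f x).card

lemma level_antitone (f : ZMod p → ℕ) : Antitone (level f) := fun s t hst =>
  card_le_card fun x hx => by
    simp only [mem_filter, mem_univ, true_and] at hx ⊢; omega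

lemma card_filter_range_lt (r m : ℕ) : ((range r).filter fun s => s < m).card = min r m := by
  have : (range r).filter (fun s => s < m) = range (min r m) := by
    ext s; simp
  rw [this, card_range]

lemma sum_level (f : ZMod p → ℕ) (r : ℕ) : ∑ s ∈ range r, level f s = ∑ x, min r (f x) := by
  simp only [level, card_filter]
  rw [sum_comm]
  refine sum_congr rfl fun x _ => ?_
  rw [← card_filter, card_filter_range_lt]

lemma sum_level_of_le (f : ZMod p → ℕ) {N : ℕ} (hN : ∀ x, f x ≤ N) :
    ∑ s ∈ range N, level f s = ∑ x, f x := by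
  rw [sum_level]; exact sum_congr rfl fun x _ => min_eq_right (hN x)

lemma Maj.sum_min_level_le {f g : ZMod p → ℕ} (h : Maj f g) {N : ℕ} (hf : ∀ x, f x ≤ N)
    (hg : ∀ x, g x ≤ N) (w : ℕ) :
    ∑ s ∈ range N, min (level f s) w ≤ ∑ s ∈ range N, min (level g s) w := by
  have hN : level g N ≤ w := by
    simp [level, filter_eq_empty_iff.mpr fun x _ => not_lt.mpr (hg x)]
  have hex : ∃ r, level g r ≤ w := ⟨N, hN⟩
  classical
  set r := Nat.find hex with hr
  have hrN : r ≤ N := Nat.find_min' hex hN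
  have hspec : level g r ≤ w := Nat.find_spec hex
  have hf' := sum_level_of_le f hf
  have hg' := sum_level_of_le g hg
  have hfr := sum_level f r
  have hgr := sum_level g r
  rw [← sum_range_add_sum_Ico _ hrN] at hf' hg' ⊢
  rw [← sum_range_add_sum_Ico _ hrN]
  have e1 : ∑ s ∈ range r, min (level f s) w ≤ r * w := by
    calc _ ≤ ∑ _s ∈ range r, w := sum_le_sum fun s _ => min_le_right _ _
      _ = _ := by simp
  have e2 : ∑ s ∈ Ico r N, min (level f s) w ≤ ∑ s ∈ Ico r N, level f s :=
    sum_le_sum fun s _ => min_le_left _ _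
  have e3 : ∑ s ∈ range r, min (level g s) w = r * w := by
    calc _ = ∑ _s ∈ range r, w := sum_congr rfl fun s hs => by
            have := Nat.find_min hex (mem_range.mp hs)
            exact min_eq_right (by omega)
      _ = _ := by simp
  have e4 : ∑ s ∈ Ico r N, min (level g s) w = ∑ s ∈ Ico r N, level g s :=
    sum_congr rfl fun s hs =>
      min_eq_left ((level_antitone g (mem_Ico.mp hs).1).trans hspec)
  have h1 := h.1
  have h2 := h.2 r
  omega

lemma sum_mul_eq_sum_card (f h : ZMod p → ℕ) {N : ℕ} (hf : ∀ x, f x ≤ N) (hh : ∀ x, h x ≤ N) :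
    ∑ x, f x * h x = ∑ s ∈ range N, ∑ t ∈ range N,
      ((univ.filter fun x => s < f x) ∩ univ.filter fun x => t < h x).card := by
  have e : ∀ x, f x * h x =
      ∑ s ∈ range N, ∑ t ∈ range N, if s < f x ∧ t < h x then 1 else 0 := by
    intro x
    have e1 := card_filter_range_lt N (f x)
    have e2 := card_filter_range_lt N (h x)
    rw [min_eq_right (hf x), card_filter] at e1
    rw [min_eq_right (hh x), card_filter] at e2
    conv_lhs => rw [← e1, ← e2, sum_mul_sum]
    refine sum_congr rfl fun s _ => sum_congr rfl fun t _ => ?_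
    by_cases h1 : s < f x <;> by_cases h2 : t < h x <;> simp [h1, h2]
  simp only [e]
  rw [sum_comm]
  refine sum_congr rfl fun s _ => ?_
  rw [sum_comm]
  refine sum_congr rfl fun t _ => ?_
  rw [← card_filter, filter_and]

/-- A rearrangement inequality for majorized pairs of functions. -/
lemma sum_mul_le_of_maj {f f' h h' : ZMod p → ℕ} (hf : Maj f f') (hh : Maj h h')
    (hord : ∀ x y, f' x < f' y → h' x ≤ h' y) :
    ∑ x, f x * h x ≤ ∑ x, f' x * h' x := by
  obtain ⟨N, hN⟩ : ∃ N, ∀ x, f x ≤ N ∧ f' x ≤ N ∧ h x ≤ N ∧ h' x ≤ N := by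
    refine ⟨∑ x, (f x + f' x + h x + h' x), fun x => ?_⟩
    have := single_le_sum (f := fun x => f x + f' x + h x + h' x)
      (fun _ _ => Nat.zero_le _) (mem_univ x)
    omega
  rw [sum_mul_eq_sum_card f h (fun x => (hN x).1) fun x => (hN x).2.2.1,
    sum_mul_eq_sum_card f' h' (fun x => (hN x).2.1) fun x => (hN x).2.2.2]
  calc _ ≤ ∑ s ∈ range N, ∑ t ∈ range N, min (level f s) (level h t) :=
        sum_le_sum fun s _ => sum_le_sum fun t _ =>
          le_min (card_le_card inter_subset_left) (card_le_card inter_subset_right)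
    _ = ∑ t ∈ range N, ∑ s ∈ range N, min (level f s) (level h t) := sum_comm
    _ ≤ ∑ t ∈ range N, ∑ s ∈ range N, min (level f' s) (level h t) :=
        sum_le_sum fun t _ => hf.sum_min_level_le (fun x => (hN x).1) (fun x => (hN x).2.1) _
    _ = ∑ s ∈ range N, ∑ t ∈ range N, min (level h t) (level f' s) := by
        rw [sum_comm]; simp only [min_comm]
    _ ≤ ∑ s ∈ range N, ∑ t ∈ range N, min (level h' t) (level f' s) :=
        sum_le_sum fun s _ =>
          hh.sum_min_level_le (fun x => (hN x).2.2.1) (fun x => (hN x).2.2.2) _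
    _ ≤ _ := by
        refine sum_le_sum fun s _ => sum_le_sum fun t _ => ?_
        by_cases hsub : (univ.filter fun x => s < f' x) ⊆ univ.filter fun x => t < h' x
        · rw [inter_eq_left.mpr hsub]; exact min_le_right _ _
        · have : (univ.filter fun x => t < h' x) ⊆ univ.filter fun x => s < f' x := by
            obtain ⟨x, hx, hx'⟩ := not_subset.mp hsub
            intro y hy
            simp only [mem_filter, mem_univ, true_and, not_lt] at hx hx' hy ⊢
            by_contra! hlt
            have := hord y x (by omega)
            omega
          rw [inter_eq_right.mpr this]; exact min_le_left _ _

lemma Maj.translate {f g : ZMod p → ℕ} (h : Maj f g) (d : ZMod p) :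
    Maj f fun x => g (x + d) := by
  refine ⟨h.1.trans (Equiv.sum_comp (Equiv.addRight d) g).symm, fun r => ?_⟩
  exact (Equiv.sum_comp (Equiv.addRight d) fun x => min r (g x)).trans_le (h.2 r)

/-- Every residue has an integer representative within `p / 2` of `c / 2`. -/
lemma exists_rep (c : ℤ) (x : ZMod p) :
    ∃ n : ℤ, (n : ZMod p) = x ∧ -p < 2 * n - c ∧ 2 * n - c ≤ p := by
  have hp : (0 : ℤ) < p := by exact_mod_cast Nat.pos_of_ne_zero (NeZero.ne p)
  obtain ⟨m, rfl⟩ := ZMod.intCast_surjective x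
  set q := (c + p - 2 * m) / (2 * p) with hq
  refine ⟨m + p * q, by simp, ?_, ?_⟩
  · have := Int.lt_ediv_add_one_mul_self (c + p - 2 * m) (b := 2 * (p : ℤ)) (by omega)
    rw [← hq] at this
    nlinarith
  · have := Int.ediv_mul_le (c + p - 2 * m) (b := 2 * (p : ℤ)) (by omega)
    rw [← hq] at this
    nlinarith

lemma SymmDecr.similarly_ordered {c : ℤ} {g h : ZMod p → ℕ} (hg : SymmDecr c g) {c' : ℤ}
    (hh : SymmDecr c' h) (hc : c' = c ∨ c' = c + 1) (x y : ZMod p) (hxy : g x < g y) :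
    h x ≤ h y := by
  obtain ⟨m, rfl, hm1, hm2⟩ := exists_rep c x
  obtain ⟨n, rfl, hn1, hn2⟩ := exists_rep c y
  have h1 : |2 * n - c| < |2 * m - c| := by
    by_contra! hle
    exact absurd (hg m n hle (abs_le.mpr ⟨by omega, hn2⟩)) (by omega)
  refine hh n m ?_ (abs_le.mpr ⟨by omega, by omega⟩)
  rcases hc with rfl | rfl <;> grind

lemma symmDecr_conv {c : ℤ} {g : ZMod p → ℕ} (hg : SymmDecr c g) {b : ℕ} (hb : b ≤ p) :
    SymmDecr (c + b - 1) (conv g (ind (initInterval p b))) := by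
  set G : ℤ → ℕ := fun x => ∑ j ∈ range b, g ((x - j : ℤ) : ZMod p) with hG
  have hconv : ∀ x : ℤ, conv g (ind (initInterval p b)) (x : ZMod p) = G x := by
    intro x; rw [conv_initInterval _ hb]; simp [hG]
  have hp : (0 : ℤ) < p := by exact_mod_cast Nat.pos_of_ne_zero (NeZero.ne p)
  have hgs : ∀ x : ℤ, g ((c - x : ℤ) : ZMod p) = g (x : ZMod p) := by
    have hle : ∀ x : ℤ, g ((c - x : ℤ) : ZMod p) ≤ g (x : ZMod p) := by
      intro x
      obtain ⟨n, hn, hn1, hn2⟩ := exists_rep c (x : ZMod p)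
      have hsub : ((c - x : ℤ) : ZMod p) = ((c - n : ℤ) : ZMod p) := by push_cast; rw [hn]
      rw [← hn, hsub]
      refine hg _ _ ?_ ?_ <;> grind
    intro x
    refine (hle x).antisymm ?_
    simpa using hle (c - x)
  have hsymm : ∀ x : ℤ, G (c + b - 1 - x) = G x := by
    intro x
    simp only [hG]
    rw [← sum_range_reflect]
    refine sum_congr rfl fun j hj => ?_
    rw [mem_range] at hj
    rw [← hgs]
    congr 2
    omega
  have hstep : ∀ x : ℤ, c + b - 1 ≤ 2 * x → 2 * (x + 1) ≤ c + b - 1 + p → G (x + 1) ≤ G x := by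
    intro x h1 h2
    have key : g ((x + 1 : ℤ) : ZMod p) ≤ g ((x + 1 - b : ℤ) : ZMod p) := by
      rcases le_or_gt (2 * (x + 1) - c) p with h | h
      · refine hg _ _ ?_ ?_ <;> grind
      · have : ((x + 1 : ℤ) : ZMod p) = ((x + 1 - p : ℤ) : ZMod p) := by simp
        rw [this]
        refine hg _ _ ?_ ?_ <;> grind
    have e : G (x + 1) + g ((x + 1 - b : ℤ) : ZMod p) = G x + g ((x + 1 : ℤ) : ZMod p) := by
      have s1 := sum_range_succ (fun j : ℕ => g ((x + 1 - j : ℤ) : ZMod p)) b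
      have s2 := sum_range_succ' (fun j : ℕ => g ((x + 1 - j : ℤ) : ZMod p)) b
      have s3 : ∀ j : ℕ, x + 1 - ((j + 1 : ℕ) : ℤ) = x - j := fun j => by push_cast; ring
      simp only [s3, Nat.cast_zero, sub_zero] at s2
      exact s1.symm.trans s2
    omega
  have hmono : ∀ (n : ℕ) (x : ℤ), c + b - 1 ≤ 2 * x → 2 * (x + n) ≤ c + b - 1 + p →
      G (x + n) ≤ G x := by
    intro n
    induction n with
    | zero => intro x _ _; simp
    | succ n ih =>
      intro x h1 h2
      push_cast at h2 ⊢
      rw [← add_assoc]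
      exact (hstep (x + n) (by omega) (by omega)).trans (ih x h1 (by omega))
  have hfold : ∀ x : ℤ, ∃ y : ℤ, G y = G x ∧ 2 * y - (c + b - 1) = |2 * x - (c + b - 1)| := by
    intro x
    rcases le_total 0 (2 * x - (c + b - 1)) with h | h
    · exact ⟨x, rfl, (abs_of_nonneg h).symm⟩
    · refine ⟨c + b - 1 - x, hsymm x, ?_⟩
      rw [abs_of_nonpos h]; ring
  intro x y hxy hy
  rw [hconv, hconv]
  obtain ⟨x', hx1, hx2⟩ := hfold x
  obtain ⟨y', hy1, hy2⟩ := hfold y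
  rw [← hx1, ← hy1]
  have h0 := abs_nonneg (2 * x - (c + b - 1))
  have := hmono (y' - x').toNat x' (by omega) (by omega)
  rwa [show x' + ((y' - x').toNat : ℤ) = y' by omega] at this

lemma symmDecr_zero : SymmDecr 0 (ind ({0} : Finset (ZMod p))) := by
  intro x y hxy hy
  have hp : (0 : ℤ) < p := by exact_mod_cast Nat.pos_of_ne_zero (NeZero.ne p)
  by_cases h : (y : ZMod p) = 0
  · have hdvd := (ZMod.intCast_zmod_eq_zero_iff_dvd y p).mp h
    have hy0 : y = 0 := Int.eq_zero_of_abs_lt_dvd hdvd (by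
      rw [abs_le] at hy; rw [abs_lt]; omega)
    have h2 : 2 * |x| ≤ 0 := by simpa [hy0] using hxy
    have hx0 : x = 0 := abs_nonpos_iff.mp (by omega)
    rw [hx0, hy0]
  · simp [ind, h]

lemma symmDecr_initInterval {m : ℕ} (hm : m ≤ p) :
    SymmDecr (m - 1 : ℤ) (ind (initInterval p m)) := by
  have h := symmDecr_conv symmDecr_zero hm
  have e : conv (ind {0}) (ind (initInterval p m)) = ind (initInterval p m) := by
    funext x
    rw [conv_comm, conv_ind]
    simp
  rwa [e, zero_add] at h

lemma sum_mul_conv (f g m : ZMod p → ℕ) :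
    ∑ x, m x * conv f g x = ∑ y, f y * conv m (fun z => g (-z)) y := by
  unfold conv
  simp only [mul_sum]
  rw [sum_comm]
  conv_rhs => rw [sum_comm, ← Equiv.sum_comp (Equiv.neg _)]
  refine sum_congr rfl fun z _ => ?_
  rw [← Equiv.sum_comp (Equiv.addRight z)]
  refine sum_congr rfl fun y _ => ?_
  simp [mul_left_comm]

/-- Convolving a symmetrically decreasing majorant with an interval majorizes convolving with
any set of the same size. -/
lemma Maj.conv_ind (hp : p.Prime) {f g : ZMod p → ℕ} (hfg : Maj f g) {c : ℤ}
    (hg : SymmDecr c g) (B : Finset (ZMod p)) :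
    Maj (conv f (ind B)) (conv g (ind (initInterval p B.card))) := by
  have hb := card_le_p B
  have htot : ∑ x, conv f (ind B) x = ∑ x, conv g (ind (initInterval p B.card)) x := by
    simp only [sum_conv, sum_ind, card_initInterval hb, hfg.1]
  refine ⟨htot, fun r => ?_⟩
  set F := conv f (ind B) with hF
  set β := ind (initInterval p B.card) with hβ
  set G := conv g β with hG
  set M := univ.filter fun x => r < F x with hM
  have hm := card_le_p M
  set μ := ind (initInterval p M.card) with hμ
  set B' := univ.filter fun z => -z ∈ B with hB'
  have hindB' : ind B' = fun z => ind B (-z) := by funext z; simp [ind, hB']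
  have hcB' : B'.card = B.card := by
    rw [← sum_ind, ← sum_ind B, hindB']
    exact Equiv.sum_comp (Equiv.neg _) (ind B)
  have hmaj := maj_two hp M B'
  rw [hcB', ← hμ, ← hβ] at hmaj
  have hsd : SymmDecr ((M.card : ℤ) - 1 + B.card - 1) (conv μ β) :=
    symmDecr_conv (symmDecr_initInterval hm) hb
  set d : ℤ := ((M.card : ℤ) - 1 + B.card - 1 - c) / 2 with hd
  have hre : ∑ x, f x * conv (ind M) (ind B') x ≤ ∑ x, g x * conv μ β (x + d) :=
    sum_mul_le_of_maj hfg (hmaj.translate (d : ZMod p))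
      (hg.similarly_ordered (hsd.translate d) (by omega))
  rw [hindB', ← sum_mul_conv, ← hF] at hre
  set e : ZMod p := d - (B.card - 1) with he
  have hadj : ∑ x, g x * conv μ β (x + d) = ∑ x, μ (x + e) * G x := by
    rw [hG, sum_mul_conv g β fun x => μ (x + e)]
    refine sum_congr rfl fun y _ => ?_
    congr 1
    unfold conv
    rw [← Equiv.sum_comp (Equiv.addRight ((B.card : ZMod p) - 1))]
    refine sum_congr rfl fun z _ => ?_
    have h1 := ind_initInterval_reflect (p := p) B.card (-z)
    rw [← hβ] at h1
    simp only [Equiv.coe_addRight, he]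
    rw [← h1]
    congr 2 <;> ring
  rw [hadj] at hre
  have hμsum : ∑ x, μ (x + e) = M.card := by
    have := Equiv.sum_comp (Equiv.addRight e) μ
    simp only [Equiv.coe_addRight] at this
    rw [this, hμ, sum_ind, card_initInterval hm]
  have hup : ∑ x, μ (x + e) * G x + ∑ x, min r (G x) ≤ r * M.card + ∑ x, G x := by
    rw [← hμsum, mul_sum, ← sum_add_distrib, ← sum_add_distrib]
    refine sum_le_sum fun x _ => ?_
    have := ind_le_one (initInterval p M.card) (x + e)
    rw [← hμ] at this
    interval_cases μ (x + e)
    · simp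
    · simp; omega
  have hdown : ∑ x, ind M x * F x + ∑ x, min r (F x) = r * M.card + ∑ x, F x := by
    rw [← sum_ind M, mul_sum, ← sum_add_distrib, ← sum_add_distrib]
    refine sum_congr rfl fun x _ => ?_
    by_cases hx : r < F x
    · have : ind M x = 1 := by simp [ind, hM, hx]
      rw [this]; omega
    · have : ind M x = 0 := by simp [ind, hM, hx]
      rw [this]; omega
  omega

lemma sigmaCount_succ {k : ℕ} (A : Fin (k + 1) → Finset (ZMod p)) :
    (fun x => sigmaCount x A) = conv (fun x => sigmaCount x fun j => A j.succ) (ind (A 0)) := by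
  funext x
  rw [Pollard.conv_ind]
  unfold sigmaCount
  rw [← card_sigma]
  refine card_bij' (fun y _ => ⟨y 0, fun j => y j.succ⟩) (fun z _ => Fin.cons z.1 z.2) ?_ ?_ ?_ ?_
  · intro y hy
    simp only [mem_filter, Fintype.mem_piFinset, mem_sigma, Fin.sum_univ_succ] at hy ⊢
    exact ⟨hy.1 0, fun j => hy.1 j.succ, by rw [hy.2]; ring⟩
  · intro z hz
    simp only [mem_filter, Fintype.mem_piFinset, mem_sigma, Fin.sum_univ_succ] at hz ⊢
    refine ⟨fun j => ?_, ?_⟩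
    · refine Fin.cases ?_ (fun j => ?_) j
      · simpa using hz.1
      · simpa using hz.2.1 j
    · simp only [Fin.cons_zero, Fin.cons_succ]
      rw [← hz.2.2]; ring
  · intro y _
    exact Fin.cons_self_tail y
  · intro z _
    simp

lemma maj_sigmaCount (hp : p.Prime) {k : ℕ} (A : Fin k → Finset (ZMod p)) :
    (∃ c, SymmDecr c fun x => sigmaCount x fun j => initInterval p (A j).card) ∧
      Maj (fun x => sigmaCount x A) fun x => sigmaCount x fun j => initInterval p (A j).card := by
  induction k with
  | zero =>
    rw [sigmaCount_zero, sigmaCount_zero]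
    exact ⟨⟨0, symmDecr_zero⟩, rfl, fun _ => le_rfl⟩
  | succ k ih =>
    obtain ⟨⟨c, hc⟩, hmaj⟩ := ih fun j => A j.succ
    rw [sigmaCount_succ A, sigmaCount_succ fun j => initInterval p (A j).card]
    exact ⟨⟨_, symmDecr_conv hc (card_le_p _)⟩, hmaj.conv_ind hp hc _⟩

lemma sum_ncount {k : ℕ} (A : Fin k → Finset (ZMod p)) (r : ℕ) :
    ∑ i ∈ Icc 1 r, ncount i A = ∑ x, min r (sigmaCount x A) := by
  rw [← sum_level]
  induction r with
  | zero => simp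
  | succ r ih =>
    rw [sum_Icc_succ_top (by omega), sum_range_succ, ih]
    rfl

end Pollard

theorem stmt_4 (p : ℕ) (hp : p.Prime) [NeZero p] (k : ℕ)
    (A : Fin k → Finset (ZMod p)) (a : Fin k → ℕ) (ha : ∀ j, (A j).card = a j)
    (r : ℕ) (hr : 1 ≤ r) :
    ∑ i ∈ Finset.Icc 1 r, ncount i (fun j => initInterval p (a j)) ≤
      ∑ i ∈ Finset.Icc 1 r, ncount i A := by
  obtain rfl : (fun j => (A j).card) = a := funext ha
  rw [Pollard.sum_ncount, Pollard.sum_ncount]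
  exact (Pollard.maj_sigmaCount hp A).2.2 r
end

section
/- For every prime p, integers k ≥ 1 and a_0,...,a_k ∈ [0,p], there exists t ∈ Z_p such that the minimum of s(A_0,...,A_k) over all subsets A_i ⊆ Z_p with |A_i| = a_i is attained by the intervals A_0 = [a_0]+t, A_1 = [a_1], ..., A_k = [a_k]. -/
/-- Number of `(k+1)`-tuples `(x 0, ..., x k)` with `x i ∈ A i` and `x 0 = x 1 + ... + x k`. -/
def scount {p : ℕ} {k : ℕ} (A : Fin (k + 1) → Finset (ZMod p)) : ℕ :=
  ((Fintype.piFinset A).filter (fun x => x 0 = ∑ i : Fin k, x i.succ)).card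

/-- The interval `[a] + t = {t, t+1, ..., t+a-1}` in `ZMod p`. -/
def interval {p : ℕ} (t : ZMod p) (a : ℕ) : Finset (ZMod p) :=
  (Finset.range a).image (fun j : ℕ => t + (j : ZMod p))

open Finset

section Intervals

variable {p : ℕ}

theorem injOn_add_natCast (s : ZMod p) {n : ℕ} (hn : n ≤ p) :
    Set.InjOn (fun j : ℕ => s + (j : ZMod p)) (range n) := by
  intro i hi j hj h
  simp only [coe_range, Set.mem_Iio] at hi hj
  have h' : (i : ZMod p) = j := add_left_cancel h
  rw [ZMod.natCast_eq_natCast_iff'] at h'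
  rwa [Nat.mod_eq_of_lt (by omega), Nat.mod_eq_of_lt (by omega)] at h'

theorem card_interval (s : ZMod p) {n : ℕ} (hn : n ≤ p) : (interval s n).card = n := by
  unfold interval
  rw [card_image_of_injOn (injOn_add_natCast s hn), card_range]

theorem sum_interval (s : ZMod p) {n : ℕ} (hn : n ≤ p) (h : ZMod p → ℕ) :
    ∑ x ∈ interval s n, h x = ∑ i ∈ range n, h (s + i) :=
  sum_image (injOn_add_natCast s hn)

theorem compl_interval [Fact p.Prime] (s : ZMod p) {n : ℕ} (hn : n ≤ p) :
    (interval s n)ᶜ = interval (s + (n : ZMod p)) (p - n) := by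
  symm
  apply eq_of_subset_of_card_le
  · intro x hx
    rw [mem_compl]
    intro hx'
    unfold interval at hx hx'
    simp only [mem_image, mem_range] at hx hx'
    obtain ⟨i, hi, rfl⟩ := hx
    obtain ⟨j, hj, h⟩ := hx'
    have h' : (j : ZMod p) = ((n + i : ℕ) : ZMod p) := by
      rw [add_assoc] at h
      push_cast
      exact add_left_cancel h
    rw [ZMod.natCast_eq_natCast_iff'] at h'
    rw [Nat.mod_eq_of_lt (by omega), Nat.mod_eq_of_lt (by omega)] at h'
    omega
  · rw [card_compl, ZMod.card, card_interval _ hn, card_interval _ (by omega)]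

/-- The interval of length `n` whose doubled midpoint is `d - 1`, rounded to the left. For fixed
`d` these intervals form a chain. -/
def centered (p : ℕ) (d : ℤ) (n : ℕ) : Finset (ZMod p) :=
  interval (((d - n) / 2 : ℤ) : ZMod p) n

theorem card_centered (d : ℤ) {n : ℕ} (hn : n ≤ p) : (centered p d n).card = n :=
  card_interval _ hn

theorem centered_mono (d : ℤ) {m n : ℕ} (hmn : m ≤ n) : centered p d m ⊆ centered p d n := by
  intro x hx
  unfold centered interval at *
  simp only [mem_image, mem_range] at *
  obtain ⟨i, hi, rfl⟩ := hx
  refine ⟨((d - m) / 2 + i - (d - n) / 2).toNat, by omega, ?_⟩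
  have h : ((((d - m) / 2 + i - (d - n) / 2).toNat : ℤ)) = (d - m) / 2 + i - (d - n) / 2 :=
    Int.toNat_of_nonneg (by omega)
  rw [← Int.cast_natCast (R := ZMod p) (Int.toNat _), h]
  push_cast
  ring

theorem compl_centered [Fact p.Prime] (d : ℤ) {n : ℕ} (hn : n ≤ p) :
    (centered p d n)ᶜ = centered p (d + p) (p - n) := by
  unfold centered
  rw [compl_interval _ hn]
  congr 1
  have h : (d + p - ((p - n : ℕ) : ℤ)) / 2 = (d - n) / 2 + n := by omega
  rw [h]
  push_cast
  ring

end Intervals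

section SumForm

variable {p : ℕ}

/-- The sum of `h` over the multiset `A + B`. -/
def sumForm (A B : Finset (ZMod p)) (h : ZMod p → ℕ) : ℕ :=
  ∑ x ∈ A, ∑ y ∈ B, h (x + y)

theorem sumForm_comm (A B : Finset (ZMod p)) (h : ZMod p → ℕ) :
    sumForm A B h = sumForm B A h := by
  unfold sumForm
  rw [sum_comm]
  simp only [add_comm]

theorem sumForm_mono_left {A A' : Finset (ZMod p)} (hA : A ⊆ A') (B : Finset (ZMod p))
    (h : ZMod p → ℕ) : sumForm A B h ≤ sumForm A' B h :=
  sum_le_sum_of_subset hA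

/-- The Dyson transform identity. -/
theorem sumForm_dyson (A B : Finset (ZMod p)) (h : ZMod p → ℕ) :
    sumForm A B h = sumForm (A ∪ B) (A ∩ B) h + sumForm (A \ B) (B \ A) h := by
  have hU : ∀ f : ZMod p → ℕ, ∑ x ∈ A ∪ B, f x = ∑ x ∈ A, f x + ∑ x ∈ B \ A, f x := fun f => by
    rw [← union_sdiff_self_eq_union, sum_union disjoint_sdiff]
  have hA : ∀ f : ZMod p → ℕ, ∑ x ∈ A, f x = ∑ x ∈ A ∩ B, f x + ∑ x ∈ A \ B, f x := fun f =>
    (sum_inter_add_sum_sdiff A B f).symm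
  have hB : ∀ f : ZMod p → ℕ, ∑ x ∈ B, f x = ∑ x ∈ A ∩ B, f x + ∑ x ∈ B \ A, f x := fun f => by
    rw [inter_comm]; exact (sum_inter_add_sum_sdiff B A f).symm
  have hc : sumForm (A ∩ B) (B \ A) h = sumForm (B \ A) (A ∩ B) h := sumForm_comm _ _ _
  unfold sumForm at *
  rw [hU]
  simp only [hA, hB, sum_add_distrib]
  omega

variable [Fact p.Prime]

theorem sumForm_univ_left (B : Finset (ZMod p)) (h : ZMod p → ℕ) :
    sumForm univ B h = B.card * ∑ x, h x := by
  rw [sumForm_comm]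
  unfold sumForm
  rw [← smul_eq_mul, ← sum_const]
  refine sum_congr rfl fun y _ => ?_
  exact Fintype.sum_equiv (Equiv.addLeft y) _ _ fun _ => rfl

theorem sumForm_le (A B : Finset (ZMod p)) (h : ZMod p → ℕ) :
    sumForm A B h ≤ B.card * ∑ x, h x :=
  (sumForm_mono_left (subset_univ A) B h).trans_eq (sumForm_univ_left B h)

theorem sumForm_le_card_mul_card (A B : Finset (ZMod p)) {h : ZMod p → ℕ} (hh : ∀ x, h x ≤ 1) :
    sumForm A B h ≤ A.card * B.card := by
  unfold sumForm
  calc ∑ x ∈ A, ∑ y ∈ B, h (x + y) ≤ ∑ x ∈ A, ∑ y ∈ B, 1 :=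
        sum_le_sum fun _ _ => sum_le_sum fun _ _ => hh _
    _ = A.card * B.card := by simp

theorem sumForm_add_sumForm_compl_left (A B : Finset (ZMod p)) (h : ZMod p → ℕ) :
    sumForm A B h + sumForm Aᶜ B h = B.card * ∑ x, h x := by
  rw [← sumForm_univ_left]
  exact sum_add_sum_compl A _

theorem sumForm_eq_compl (A B : Finset (ZMod p)) (hAB : p ≤ A.card + B.card) (h : ZMod p → ℕ) :
    sumForm A B h = (A.card + B.card - p) * ∑ x, h x + sumForm Aᶜ Bᶜ h := by
  have h1 := sumForm_add_sumForm_compl_left A B h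
  have h2 := sumForm_add_sumForm_compl_left B Aᶜ h
  rw [sumForm_comm B, sumForm_comm Bᶜ, card_compl, ZMod.card] at h2
  have hA : A.card ≤ p := by simpa [ZMod.card] using card_le_univ A
  obtain ⟨q, hq⟩ := Nat.exists_eq_add_of_le hA
  obtain ⟨e, he⟩ := Nat.exists_eq_add_of_le (show q ≤ B.card by omega)
  rw [show A.card + B.card - p = e by omega]
  rw [show p - A.card = q by omega] at h2
  rw [he, add_mul] at h1
  omega

theorem exists_mem_add_notMem {A : Finset (ZMod p)} (hA : A.Nonempty) (hA' : A ≠ univ)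
    {d : ZMod p} (hd : d ≠ 0) : ∃ a ∈ A, a + d ∉ A := by
  by_contra! H
  obtain ⟨a, ha⟩ := hA
  have key : ∀ n : ℕ, a + n * d ∈ A := by
    intro n
    induction n with
    | zero => simpa using ha
    | succ n ih =>
      have := H _ ih
      push_cast
      convert this using 1
      ring
  apply hA'
  ext x
  simp only [mem_univ, iff_true]
  have := key ((x - a) / d).val
  rw [ZMod.natCast_zmod_val, div_mul_cancel₀ _ hd] at this
  simpa using this

theorem exists_translate {A B : Finset (ZMod p)} (hA : A.Nonempty) (hA' : A ≠ univ)
    (hB : 1 < B.card) :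
    ∃ g : ZMod p, (A.map (addRightEmbedding g) ∩ B).Nonempty ∧
      ¬ B ⊆ A.map (addRightEmbedding g) := by
  obtain ⟨b, hb, b', hb', hne⟩ := one_lt_card.mp hB
  obtain ⟨a, ha, had⟩ := exists_mem_add_notMem hA hA' (sub_ne_zero.mpr hne.symm)
  refine ⟨b - a, ⟨b, ?_⟩, fun hsub => had ?_⟩
  · simp only [mem_inter, mem_map, addRightEmbedding_apply]
    exact ⟨⟨a, ha, by ring⟩, hb⟩
  · have := hsub hb'
    simp only [mem_map, addRightEmbedding_apply] at this
    obtain ⟨a', ha', h⟩ := this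
    have : a + (b' - b) = a' := by rw [← h]; ring
    rwa [this]

theorem sumForm_map_left (A B : Finset (ZMod p)) (g : ZMod p) (h : ZMod p → ℕ) :
    sumForm (A.map (addRightEmbedding g)) B (fun x => h (x - g)) = sumForm A B h := by
  unfold sumForm
  rw [sum_map]
  refine sum_congr rfl fun x _ => sum_congr rfl fun y _ => ?_
  simp only [addRightEmbedding_apply]
  congr 1
  ring

/-- A dual form of Pollard's theorem. -/
theorem sumForm_le_pollard (A B : Finset (ZMod p)) (hAB : A.card + B.card ≤ p)
    {T : ℕ} (hTA : T ≤ A.card) (hTB : T ≤ B.card) {h : ZMod p → ℕ} (hh : ∀ x, h x ≤ 1) :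
    sumForm A B h ≤ T * ∑ x, h x + (A.card - T) * (B.card - T) := by
  induction hn : B.card using Nat.strong_induction_on generalizing A B T h with
  | _ n ih =>
  subst hn
  rcases Nat.eq_zero_or_pos T with rfl | hT
  · simpa using sumForm_le_card_mul_card A B hh
  rcases hTB.eq_or_lt with rfl | hTB'
  · simpa using sumForm_le A B h
  have hAne : A.Nonempty := card_pos.mp (by omega)
  have hAu : A ≠ univ := by
    rintro rfl
    rw [card_univ, ZMod.card] at hAB
    omega
  obtain ⟨g, hg, hg'⟩ := exists_translate hAne hAu (show 1 < B.card by omega)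
  rw [← sumForm_map_left A B g h]
  have hH : ∑ x, h x = ∑ x, h (x - g) :=
    (Fintype.sum_equiv (Equiv.subRight g) _ _ fun _ => rfl).symm
  rw [hH]
  have hh' : ∀ x, (fun x => h (x - g)) x ≤ 1 := fun x => hh _
  generalize (fun x => h (x - g)) = f at *
  have hcA : (A.map (addRightEmbedding g)).card = A.card := card_map _
  rw [← hcA] at hAB hTA ⊢
  generalize A.map (addRightEmbedding g) = A' at *
  rw [sumForm_dyson]
  have hi : 0 < (A' ∩ B).card := card_pos.mpr hg
  have hU := card_union_add_card_inter A' B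
  have hA1 := card_sdiff_add_card_inter A' B
  have hB1 := card_sdiff_add_card_inter B A'
  rw [inter_comm] at hB1
  have hilt : 0 < (B \ A').card := card_pos.mpr (sdiff_nonempty.mpr hg')
  rcases le_or_gt T (A' ∩ B).card with hTi | hTi
  · have h1 := ih (A' ∩ B).card (by omega) (A' ∪ B) (A' ∩ B) (by omega) (T := T) (by omega) hTi
      hh' rfl
    have h2 := sumForm_le_card_mul_card (A' \ B) (B \ A') hh'
    obtain ⟨j, hj⟩ := Nat.exists_eq_add_of_le hTi
    refine (add_le_add h1 h2).trans_eq ?_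
    rw [add_assoc]
    congr 1
    rw [show (A' ∪ B).card - T = (A' \ B).card + (B \ A').card + j by omega,
      show (A' ∩ B).card - T = j by omega, show A'.card - T = (A' \ B).card + j by omega,
      show B.card - T = (B \ A').card + j by omega]
    ring
  · have h1 := sumForm_le (A' ∪ B) (A' ∩ B) f
    have h2 := ih (B \ A').card (by omega) (A' \ B) (B \ A') (by omega)
      (T := T - (A' ∩ B).card) (by omega) (by omega) hh' rfl
    refine (add_le_add h1 h2).trans_eq ?_
    rw [← add_assoc, ← add_mul, show (A' ∩ B).card + (T - (A' ∩ B).card) = T by omega,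
      show (A' \ B).card - (T - (A' ∩ B).card) = A'.card - T by omega,
      show (B \ A').card - (T - (A' ∩ B).card) = B.card - T by omega]

end SumForm

section Layers

/-- The sizes of the level sets of the convolution of two integer intervals. -/
def hookSizes : ℕ → ℕ → Multiset ℕ
  | n + 1, b + 1 => (n + b + 1) ::ₘ hookSizes n b
  | 0, _ => 0
  | _ + 1, 0 => 0

theorem lt_of_mem_hookSizes {n b m : ℕ} (hm : m ∈ hookSizes n b) : m < n + b := by
  induction n, b using hookSizes.induct with
  | case1 n b ih =>
    rw [hookSizes, Multiset.mem_cons] at hm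
    rcases hm with rfl | hm
    · omega
    · have := ih hm
      omega
  | case2 => simp [hookSizes] at hm
  | case3 => simp [hookSizes] at hm

theorem sum_hookSizes (n b : ℕ) : (hookSizes n b).sum = n * b := by
  induction n, b using hookSizes.induct with
  | case1 n b ih =>
    rw [hookSizes, Multiset.sum_cons, ih, Nat.succ_eq_add_one, Nat.succ_eq_add_one]
    ring
  | case2 => simp [hookSizes]
  | case3 => simp [hookSizes]

theorem exists_sum_min_hookSizes (c n b : ℕ) : ∃ T, T ≤ n ∧ T ≤ b ∧
    ((hookSizes n b).map (min c)).sum = T * c + (n - T) * (b - T) := by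
  induction n, b using hookSizes.induct with
  | case1 n b ih =>
    rcases le_or_gt (n + b + 1) c with hc | hc
    · refine ⟨0, by omega, by omega, ?_⟩
      have : (hookSizes (n + 1) (b + 1)).map (min c) = (hookSizes (n + 1) (b + 1)).map id := by
        refine Multiset.map_congr rfl fun m hm => ?_
        have := lt_of_mem_hookSizes hm
        simp only [id]
        omega
      rw [this, Multiset.map_id, sum_hookSizes]
      simp
    · obtain ⟨T, h1, h2, h3⟩ := ih
      refine ⟨T + 1, by omega, by omega, ?_⟩
      rw [hookSizes, Multiset.map_cons, Multiset.sum_cons, h3, min_eq_left hc.le,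
        Nat.succ_eq_add_one, Nat.succ_eq_add_one, Nat.add_sub_add_right, Nat.add_sub_add_right]
      ring
  | case2 b => exact ⟨0, by simp [hookSizes]⟩
  | case3 n => exact ⟨0, by simp [hookSizes]⟩

theorem sum_range_hook (n b : ℕ) (φ : ℕ → ℕ) :
    ∑ i ∈ range (n + 1), ∑ j ∈ range (b + 1), φ (i + j) =
      ∑ i ∈ range (n + b + 1), φ i + ∑ i ∈ range n, ∑ j ∈ range b, φ (i + j + 1) := by
  simp only [sum_range_succ _ b, sum_add_distrib]
  rw [sum_range_succ' _ n, show n + b + 1 = b + (n + 1) by ring, sum_range_add φ b]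
  simp only [zero_add, add_comm b, add_right_comm _ 1]
  omega

theorem sum_range_hookSizes (n b : ℕ) (d : ℤ) (φ : ℤ → ℕ) :
    ∑ i ∈ range n, ∑ j ∈ range b, φ ((d - n) / 2 + i + j) =
      ((hookSizes n b).map fun m => ∑ i ∈ range m, φ ((d + b - 1 - m) / 2 + i)).sum := by
  induction n, b using hookSizes.induct generalizing d with
  | case1 n b ih =>
    have hk := sum_range_hook n b fun i => φ ((d - (n + 1 : ℕ)) / 2 + i)
    rw [hookSizes, Multiset.map_cons, Multiset.sum_cons]
    have e1 : ∀ i j : ℕ, (d - (n + 1 : ℕ)) / 2 + i + j = (d - (n + 1 : ℕ)) / 2 + (i + j : ℕ) := by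
      intro i j; push_cast; ring
    simp only [e1]
    rw [hk]
    have ih' := ih (d + 1)
    have e2 : ∀ i j : ℕ, (d + 1 - n) / 2 + i + j = (d - (n + 1 : ℕ)) / 2 + (i + j + 1 : ℕ) := by
      intro i j; omega
    simp only [e2] at ih'
    rw [ih']
    congr 1
    · refine sum_congr rfl fun i _ => ?_
      congr 1
      omega
    · congr 1
      refine Multiset.map_congr rfl fun m _ => sum_congr rfl fun i _ => ?_
      congr 1
      omega
  | case2 b => simp [hookSizes]
  | case3 n => simp [hookSizes]

/-- The sizes of the level sets of the convolution of two intervals of lengths `n` and `b` in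
`ZMod p`. -/
def layerSizes (p n b : ℕ) : Multiset ℕ :=
  if n + b ≤ p then hookSizes n b
  else Multiset.replicate (n + b - p) p + hookSizes (p - n) (p - b)

theorem le_of_mem_layerSizes {p n b m : ℕ} (hn : n ≤ p) (hb : b ≤ p) (hm : m ∈ layerSizes p n b) :
    m ≤ p := by
  unfold layerSizes at hm
  split_ifs at hm with h
  · exact (lt_of_mem_hookSizes hm).le.trans h
  · rw [Multiset.mem_add] at hm
    rcases hm with hm | hm
    · exact (Multiset.eq_of_mem_replicate hm).le
    · have := lt_of_mem_hookSizes hm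
      omega

variable {p : ℕ} [Fact p.Prime]

theorem sum_centered (d : ℤ) {n : ℕ} (hn : n ≤ p) (h : ZMod p → ℕ) :
    ∑ x ∈ centered p d n, h x = ∑ i ∈ range n, h (((d - n) / 2 + i : ℤ) : ZMod p) := by
  unfold centered
  rw [sum_interval _ hn]
  simp

theorem centered_eq_univ (d : ℤ) : centered p d p = univ := by
  apply eq_univ_of_card
  rw [card_centered d le_rfl, ZMod.card]

theorem sumForm_centered_of_add_le (d : ℤ) (s : ℤ) {n b : ℕ} (hnb : n + b ≤ p) (h : ZMod p → ℕ) :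
    sumForm (centered p d n) (interval (s : ZMod p) b) h =
      ((hookSizes n b).map fun m => ∑ x ∈ centered p (d + b - 1 + 2 * s) m, h x).sum := by
  have h1 := sum_range_hookSizes n b d fun i => h ((i + s : ℤ) : ZMod p)
  unfold sumForm
  rw [sum_centered d (by omega)]
  simp only [sum_interval _ (show b ≤ p by omega)]
  convert h1 using 1
  · refine sum_congr rfl fun i _ => sum_congr rfl fun j _ => ?_
    congr 1
    push_cast
    ring
  · congr 1
    refine Multiset.map_congr rfl fun m hm => ?_
    have := lt_of_mem_hookSizes hm
    rw [sum_centered _ (by omega)]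
    refine sum_congr rfl fun i _ => ?_
    congr 2
    omega

theorem centered_add_two_mul (d : ℤ) (n : ℕ) : centered p (d + 2 * p) n = centered p d n := by
  unfold centered
  rw [show (d + 2 * p - n) / 2 = (d - n) / 2 + p by omega]
  simp

theorem sumForm_centered (d : ℤ) {n b : ℕ} (hn : n ≤ p) (hb : b ≤ p) (h : ZMod p → ℕ) :
    sumForm (centered p d n) (interval 0 b) h =
      ((layerSizes p n b).map fun m => ∑ x ∈ centered p (d + b - 1) m, h x).sum := by
  unfold layerSizes
  split_ifs with hnb
  · simpa using sumForm_centered_of_add_le d 0 hnb h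
  · have hc1 := card_centered d hn
    have hc2 := card_interval (0 : ZMod p) hb
    rw [sumForm_eq_compl _ _ (by omega), hc1, hc2, compl_centered d hn, compl_interval _ hb,
      Multiset.map_add, Multiset.sum_add, Multiset.map_replicate, Multiset.sum_replicate,
      centered_eq_univ, smul_eq_mul]
    congr 1
    have := sumForm_centered_of_add_le (p := p) (d + p) b (n := p - n) (b := p - b) (by omega) h
    rw [zero_add]
    rw [Int.cast_natCast] at this
    rw [this]
    congr 1
    refine Multiset.map_congr rfl fun m _ => ?_
    rw [show d + p + (p - b : ℕ) - 1 + 2 * b = d + b - 1 + 2 * p by omega, centered_add_two_mul]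

end Layers

section TopSum

variable {p : ℕ}

theorem eq_sum_levels (h : ZMod p → ℕ) {K : ℕ} (hK : ∀ x, h x ≤ K) (x : ZMod p) :
    h x = ∑ j ∈ range K, if j < h x then 1 else 0 := by
  rw [sum_boole, Nat.cast_id]
  have : (range K).filter (· < h x) = range (h x) := by
    ext j
    have := hK x
    simp only [mem_filter, mem_range]
    omega
  rw [this, card_range]

variable [Fact p.Prime]

/-- The largest sum of `h` over a set of size `n`. -/
def topSum (n : ℕ) (h : ZMod p → ℕ) : ℕ :=
  (powersetCard n univ).sup fun N => ∑ x ∈ N, h x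

theorem sum_le_topSum (N : Finset (ZMod p)) (h : ZMod p → ℕ) :
    ∑ x ∈ N, h x ≤ topSum N.card h :=
  le_sup (f := fun N => ∑ x ∈ N, h x) (mem_powersetCard.mpr ⟨subset_univ _, rfl⟩)

theorem exists_topSum_eq {n : ℕ} (hn : n ≤ p) (h : ZMod p → ℕ) :
    ∃ N : Finset (ZMod p), N.card = n ∧ topSum n h = ∑ x ∈ N, h x := by
  have hne : (powersetCard n (univ : Finset (ZMod p))).Nonempty :=
    powersetCard_nonempty.mpr (by rwa [card_univ, ZMod.card])
  obtain ⟨N, hN, h'⟩ := exists_mem_eq_sup _ hne fun N => ∑ x ∈ N, h x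
  exact ⟨N, (mem_powersetCard.mp hN).2, h'⟩

theorem exists_card_eq_dominating {n : ℕ} (hn : n ≤ p) (h : ZMod p → ℕ) :
    ∃ N : Finset (ZMod p), N.card = n ∧ ∀ x ∈ N, ∀ y ∉ N, h y ≤ h x := by
  induction n with
  | zero => exact ⟨∅, by simp⟩
  | succ n ih =>
    obtain ⟨N, hN, hd⟩ := ih (by omega)
    have hne : Nᶜ.Nonempty := by
      rw [← card_pos, card_compl, ZMod.card]
      omega
    obtain ⟨x, hx, hmax⟩ := exists_max_image Nᶜ h hne
    rw [mem_compl] at hx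
    refine ⟨insert x N, by rw [card_insert_of_notMem hx, hN], fun z hz y hy => ?_⟩
    rw [mem_insert, not_or] at hy
    rcases mem_insert.mp hz with rfl | hz
    · exact hmax y (mem_compl.mpr hy.2)
    · exact hd z hz y hy.2

theorem sum_min_levels_le_topSum {n : ℕ} (hn : n ≤ p) (h : ZMod p → ℕ) {K : ℕ}
    (hK : ∀ x, h x ≤ K) :
    ∑ j ∈ range K, min (∑ x, if j < h x then 1 else 0) n ≤ topSum n h := by
  obtain ⟨N, rfl, hd⟩ := exists_card_eq_dominating hn h
  refine le_trans ?_ (sum_le_topSum N h)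
  rw [sum_congr rfl fun x _ => eq_sum_levels h hK x, sum_comm]
  refine sum_le_sum fun j _ => ?_
  by_cases hj : ∀ x ∈ N, j < h x
  · refine (min_le_right _ _).trans ?_
    rw [sum_congr rfl fun x hx => if_pos (hj x hx)]
    simp
  · push Not at hj
    obtain ⟨x, hx, hxj⟩ := hj
    refine (min_le_left _ _).trans_eq ?_
    refine (sum_subset (subset_univ N) fun y _ hy => if_neg ?_).symm
    have := hd x hx y hy
    omega

theorem topSum_univ (h : ZMod p → ℕ) : topSum p h = ∑ x, h x := by
  obtain ⟨N, hN, h'⟩ := exists_topSum_eq le_rfl h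
  rw [h', eq_univ_of_card N (by rw [hN, ZMod.card])]

theorem sumForm_le_of_add_le (A B : Finset (ZMod p)) (hAB : A.card + B.card ≤ p)
    (h : ZMod p → ℕ) :
    sumForm A B h ≤ ((hookSizes A.card B.card).map fun m => topSum m h).sum := by
  have hK : ∀ x, h x ≤ ∑ y, h y := fun x =>
    single_le_sum (f := h) (fun _ _ => Nat.zero_le _) (mem_univ x)
  set K := ∑ y, h y
  have h1 : sumForm A B h =
      ∑ j ∈ range K, sumForm A B fun x => if j < h x then 1 else 0 := by
    unfold sumForm
    rw [sum_comm (s := range K)]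
    refine sum_congr rfl fun x _ => ?_
    rw [sum_comm (s := range K)]
    exact sum_congr rfl fun y _ => eq_sum_levels h hK _
  have h2 : ∀ j : ℕ, (sumForm A B fun x => if j < h x then 1 else 0) ≤
      ((hookSizes A.card B.card).map (min (∑ x, if j < h x then 1 else 0))).sum := by
    intro j
    obtain ⟨T, hT1, hT2, hT3⟩ :=
      exists_sum_min_hookSizes (∑ x, if j < h x then 1 else 0) A.card B.card
    rw [hT3]
    exact sumForm_le_pollard A B hAB hT1 hT2 fun x => by split_ifs <;> simp
  rw [h1]
  refine (sum_le_sum fun j _ => h2 j).trans ?_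
  refine (Multiset.sum_map_sum (M := ℕ) (m := hookSizes A.card B.card) (s := range K)
    (f := fun m j => min (∑ x, if j < h x then 1 else 0) m)).symm.trans_le ?_
  refine Multiset.sum_map_le_sum_map _ _ fun m hm => ?_
  have := lt_of_mem_hookSizes hm
  exact sum_min_levels_le_topSum (by omega) h hK

theorem sumForm_le_topSum (A B : Finset (ZMod p)) (h : ZMod p → ℕ) :
    sumForm A B h ≤ ((layerSizes p A.card B.card).map fun m => topSum m h).sum := by
  unfold layerSizes
  split_ifs with hAB
  · exact sumForm_le_of_add_le A B hAB h
  · have hA : Aᶜ.card = p - A.card := by rw [card_compl, ZMod.card]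
    have hB : Bᶜ.card = p - B.card := by rw [card_compl, ZMod.card]
    rw [sumForm_eq_compl _ _ (by omega), Multiset.map_add, Multiset.sum_add,
      Multiset.map_replicate, Multiset.sum_replicate, topSum_univ, smul_eq_mul, ← hA, ← hB]
    exact Nat.add_le_add_left (sumForm_le_of_add_le _ _ (by omega) h) _

end TopSum

section Rearrangement

variable {p : ℕ}

theorem sum_piFinset_succ {k : ℕ} (B : Fin (k + 1) → Finset (ZMod p)) (h : ZMod p → ℕ) :
    ∑ y ∈ Fintype.piFinset B, h (∑ i, y i) =
      ∑ y ∈ Fintype.piFinset fun i => B (Fin.succ i), ∑ z ∈ B 0, h (∑ i, y i + z) := by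
  rw [← sum_product']
  refine sum_nbij' (fun y => (Fin.tail y, y 0)) (fun q => Fin.cons q.2 q.1) ?_ ?_ ?_ ?_ ?_
  · intro y hy
    simp only [Fintype.mem_piFinset, mem_product] at *
    exact ⟨fun i => hy _, hy 0⟩
  · intro q hq
    simp only [Fintype.mem_piFinset, mem_product] at *
    exact Fin.cases hq.2 hq.1
  · intro y _
    simp
  · intro q _
    simp
  · intro y _
    rw [Fin.sum_univ_succ, add_comm]
    rfl

variable [Fact p.Prime]

/-- A rearrangement inequality in `ZMod p`: the multiset `[a 0] + ⋯ + [a (k - 1)]` is a union of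
intervals from a single chain, and the sizes of these intervals control every other multiset
`B 0 + ⋯ + B (k - 1)` with the same cardinalities. -/
theorem exists_layers {k : ℕ} (a : Fin k → ℕ) (ha : ∀ i, a i ≤ p) :
    ∃ (d : ℤ) (L : Multiset ℕ), (∀ m ∈ L, m ≤ p) ∧
      (∀ h : ZMod p → ℕ, ∑ y ∈ Fintype.piFinset fun i => interval (0 : ZMod p) (a i),
        h (∑ i, y i) = (L.map fun m => ∑ x ∈ centered p d m, h x).sum) ∧
      ∀ B : Fin k → Finset (ZMod p), (∀ i, (B i).card = a i) → ∀ h : ZMod p → ℕ,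
        ∑ y ∈ Fintype.piFinset B, h (∑ i, y i) ≤ (L.map fun m => topSum m h).sum := by
  induction k with
  | zero =>
    have hp1 : 1 ≤ p := (Fact.out : p.Prime).one_le
    refine ⟨1, {1}, by simpa using hp1, fun h => ?_, fun B _ h => ?_⟩
    · simp [sum_centered 1 hp1, Fintype.piFinset_of_isEmpty]
    · have := sum_le_topSum {(0 : ZMod p)} h
      simpa [Fintype.piFinset_of_isEmpty] using this
  | succ k ih =>
    obtain ⟨d, L, hL, hint, hB⟩ := ih (fun i => a i.succ) fun i => ha _
    refine ⟨d + a 0 - 1, L.bind fun n => layerSizes p n (a 0), ?_, fun h => ?_, fun B hBa h => ?_⟩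
    · intro m hm
      obtain ⟨n, hn, hm⟩ := Multiset.mem_bind.mp hm
      exact le_of_mem_layerSizes (hL n hn) (ha 0) hm
    · rw [sum_piFinset_succ, hint fun y => ∑ z ∈ interval 0 (a 0), h (y + z), Multiset.map_bind,
        Multiset.sum_bind]
      congr 1
      exact Multiset.map_congr rfl fun n hn => sumForm_centered d (hL n hn) (ha 0) h
    · rw [sum_piFinset_succ, Multiset.map_bind, Multiset.sum_bind]
      refine (hB (fun i => B i.succ) (fun i => hBa _) fun y => ∑ z ∈ B 0, h (y + z)).trans ?_
      refine Multiset.sum_map_le_sum_map _ _ fun n hn => ?_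
      obtain ⟨N, rfl, hN⟩ := exists_topSum_eq (hL n hn) fun y => ∑ z ∈ B 0, h (y + z)
      rw [hN, ← hBa 0]
      exact sumForm_le_topSum N (B 0) h

theorem scount_eq_sum {k : ℕ} (A : Fin (k + 1) → Finset (ZMod p)) :
    scount A = ∑ y ∈ Fintype.piFinset fun i => A (Fin.succ i),
      if ∑ i, y i ∈ A 0 then 1 else 0 := by
  unfold scount
  rw [sum_boole, Nat.cast_id]
  refine card_nbij' Fin.tail (fun y => Fin.cons (∑ i, y i) y) ?_ ?_ ?_ ?_
  · intro x hx
    simp only [coe_filter, Fintype.mem_piFinset, Set.mem_ofPred_eq] at *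
    exact ⟨fun i => hx.1 _, by simpa [Fin.tail, ← hx.2] using hx.1 0⟩
  · intro y hy
    simp only [coe_filter, Fintype.mem_piFinset, Set.mem_ofPred_eq] at *
    exact ⟨Fin.cases hy.2 hy.1, by simp⟩
  · intro x hx
    simp only [coe_filter, Set.mem_ofPred_eq] at hx
    have : ∑ i, Fin.tail x i = x 0 := hx.2.symm
    simp only [this, Fin.cons_self_tail]
  · intro y _
    simp

theorem scount_add_compl {k : ℕ} (A : Fin (k + 1) → Finset (ZMod p)) :
    scount A + (∑ y ∈ Fintype.piFinset fun i => A (Fin.succ i),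
      if ∑ i, y i ∈ (A 0)ᶜ then 1 else 0) = ∏ i : Fin k, (A i.succ).card := by
  rw [scount_eq_sum, ← sum_add_distrib, ← Fintype.card_piFinset, card_eq_sum_ones]
  refine sum_congr rfl fun y _ => ?_
  by_cases hy : ∑ i, y i ∈ A 0 <;> simp [hy]

end Rearrangement

theorem stmt_5 (p : ℕ) (hp : p.Prime) (k : ℕ) (hk : 1 ≤ k)
    (a : Fin (k + 1) → ℕ) (ha : ∀ i, a i ≤ p) :
    ∃ t : ZMod p,
      ∀ B : Fin (k + 1) → Finset (ZMod p), (∀ i, (B i).card = a i) →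
        scount (fun i => if i = 0 then interval t (a 0) else interval 0 (a i)) ≤ scount B := by
  have : Fact p.Prime := ⟨hp⟩
  obtain ⟨d, L, hL, hint, hB⟩ := exists_layers (fun i => a (Fin.succ i)) fun i => ha _
  have h0 := ha 0
  obtain ⟨t, ht⟩ : ∃ t : ZMod p, (interval t (a 0))ᶜ = centered p d (p - a 0) := by
    refine ⟨((d - (p - a 0 : ℕ)) / 2 : ℤ) + (p - a 0 : ℕ), ?_⟩
    have := compl_interval (((d - (p - a 0 : ℕ)) / 2 : ℤ) : ZMod p) (show p - a 0 ≤ p by omega)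
    rw [show p - (p - a 0) = a 0 by omega] at this
    rw [← this, compl_compl, centered]
  refine ⟨t, fun B hBa => ?_⟩
  have h1 := scount_add_compl fun i => if i = 0 then interval t (a 0) else interval 0 (a i)
  have h2 := scount_add_compl B
  simp only [Fin.succ_ne_zero, if_false, if_true, card_interval _ (ha _), ht] at h1
  simp only [hBa] at h2
  have h3 := hint fun x => if x ∈ centered p d (p - a 0) then 1 else 0
  have h4 := hB (fun i => B i.succ) (fun i => hBa _) fun x => if x ∈ (B 0)ᶜ then 1 else 0
  have h5 : (L.map fun m => topSum m fun x => if x ∈ (B 0)ᶜ then 1 else 0).sum ≤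
      (L.map fun m => ∑ x ∈ centered p d m,
        if x ∈ centered p d (p - a 0) then 1 else 0).sum := by
    refine Multiset.sum_map_le_sum_map _ _ fun m hm => ?_
    obtain ⟨N, hN, hN'⟩ := exists_topSum_eq (hL m hm) fun x => if x ∈ (B 0)ᶜ then 1 else 0
    rw [hN', sum_boole, sum_boole, Nat.cast_id, Nat.cast_id, filter_mem_eq_inter,
      filter_mem_eq_inter]
    rcases le_total m (p - a 0) with hle | hle
    · rw [inter_eq_left.mpr (centered_mono d hle), card_centered d (hL m hm), ← hN]
      exact card_le_card inter_subset_left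
    · rw [inter_eq_right.mpr (centered_mono d hle), card_centered d (by omega), ← hBa 0]
      refine (card_le_card inter_subset_right).trans_eq ?_
      rw [card_compl, ZMod.card]
  omega
end
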